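/- arXiv:2604.26901 — 2 statements merged into one kernel-verified Lean document; each statement's English description precedes it below -/
import Mathlib

section
/- If H and K are cancellative monoids, then every isomorphism f from P_1(H) to P_1(K) maps the finite subsets of H containing the identity bijectively onto the finite subsets of K containing the identity; that is, f restricts to an isomorphism from P_fin,1(H) to P_fin,1(K). -/
open Pointwise

/-- The reduced large power monoid: subsets of a monoid `H` containing the identity,
under setwise multiplication. -/
def P1 (H : Type*) [Monoid H] : Type _ := {X : Set H // (1 : H) ∈ X}

noncomputable instance {H : Type*} [Monoid H] : Mul (P1 H) :=
  ⟨fun X Y => ⟨X.1 * Y.1, by simpa using Set.mul_mem_mul X.2 Y.2⟩⟩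

/-! A finite set has only finitely many left divisors in the reduced power monoid, since each of
them is a subset. Conversely, the elements `x ≠ 1` of `X` yield distinct left divisors `X² \ {x}` of
`X³`: the only products lost by removing `x` from `X²` are those of the form `x * c` with `c ∈ X`,
and such a product is recovered as `(x * c) * 1` if `x * c ≠ x`, and as `1 * x` otherwise. Hence `X`
is finite if and only if `X³` has finitely many left divisors, a condition preserved by
isomorphisms. -/

theorem injOn_sdiff_singleton {α : Type*} (Y : Set α) : Set.InjOn (fun x => Y \ {x}) Y :=
  fun _ hx _ hy hxy => Set.singleton_injective <|
    (sdiff_right_inj (Set.singleton_subset_iff.2 hx) (Set.singleton_subset_iff.2 hy)).1 hxy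

theorem sdiff_singleton_mul_of_mul_self_subset {M : Type*} [MulOneClass M] {X Y : Set M} {x : M}
    (h1 : 1 ∈ X) (hXY : X * X ⊆ Y) (hx : x ∈ X) (hx1 : x ≠ 1) : (Y \ {x}) * X = Y * X := by
  refine (Set.mul_subset_mul_right Set.sdiff_subset).antisymm ?_
  rintro _ ⟨p, hp, c, hc, rfl⟩
  by_cases hpx : p = x
  · subst hpx
    by_cases hpc : p * c = p
    · have h1Y : 1 ∈ Y := hXY ⟨1, h1, 1, h1, mul_one 1⟩
      exact ⟨1, ⟨h1Y, hx1.symm⟩, p, hx, (one_mul p).trans hpc.symm⟩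
    · exact ⟨p * c, ⟨hXY (Set.mul_mem_mul hx hc), hpc⟩, 1, h1, mul_one _⟩
  · exact Set.mul_mem_mul ⟨hp, hpx⟩ hc

namespace P1

variable {H K : Type*} [Monoid H] [Monoid K]

theorem val_mul (X Y : P1 H) : (X * Y).1 = X.1 * Y.1 := rfl

noncomputable instance : Semigroup (P1 H) :=
  Function.Injective.semigroup (fun X : P1 H => X.1) Subtype.val_injective val_mul

theorem subset_of_dvd {A B : P1 H} (h : A ∣ B) : A.1 ⊆ B.1 := by
  obtain ⟨C, rfl⟩ := h
  exact Set.subset_mul_left A.1 C.2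

theorem finite_setOf_dvd {B : P1 H} (hB : B.1.Finite) : {A : P1 H | A ∣ B}.Finite :=
  .of_injOn (fun _ hA => subset_of_dvd hA) Subtype.val_injective.injOn hB.finite_subsets

theorem finite_of_finite_setOf_dvd_mul_self_mul_self {X : P1 H}
    (hX : {A : P1 H | A ∣ X * X * X}.Finite) : X.1.Finite := by
  have hsub : X.1 ⊆ (X * X).1 := subset_of_dvd (dvd_mul_right X X)
  have hmaps : Set.MapsTo (fun x => (X * X).1 \ {x}) (X.1 \ {1})
      ((fun A : P1 H => A.1) '' {A | A ∣ X * X * X}) := by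
    rintro x ⟨hx, hx1⟩
    refine ⟨⟨(X * X).1 \ {x}, (X * X).2, Ne.symm hx1⟩, ⟨X, Subtype.ext ?_⟩, rfl⟩
    exact (sdiff_singleton_mul_of_mul_self_subset X.2 subset_rfl hx hx1).symm
  have hinj : Set.InjOn (fun x => (X * X).1 \ {x}) (X.1 \ {1}) :=
    (injOn_sdiff_singleton _).mono (Set.sdiff_subset.trans hsub)
  exact (Set.Finite.of_injOn hmaps hinj (hX.image _)).of_sdiff (Set.finite_singleton 1)

theorem finite_of_finite_map {f : P1 H →ₙ* P1 K} (hf : Function.Injective f) {X : P1 H}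
    (hX : (f X).1.Finite) : X.1.Finite := by
  have hcube : (f (X * X * X)).1.Finite := by
    simpa only [map_mul, val_mul] using (hX.mul hX).mul hX
  exact finite_of_finite_setOf_dvd_mul_self_mul_self <|
    .of_injOn (f := f) (fun _ hA => map_dvd f hA) hf.injOn (finite_setOf_dvd hcube)

end P1

theorem stmt3_general {H K : Type*} [Monoid H] [Monoid K] (f : P1 H ≃* P1 K) (X : P1 H) :
    X.1.Finite ↔ (f X).1.Finite where
  mp hX := P1.finite_of_finite_map (f := f.symm.toMulHom) f.symm.injective <| by
    simpa using hX
  mpr := P1.finite_of_finite_map (f := f.toMulHom) f.injective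

/-- If `H` and `K` are cancellative monoids, every isomorphism
`f : P_1(H) → P_1(K)` maps the finite subsets of `H` containing `1` bijectively onto the
finite subsets of `K` containing `1`: since `f` is a bijection, this is equivalent to
`X` being finite iff `f X` is finite. -/
theorem stmt3 {H K : Type*} [CancelMonoid H] [CancelMonoid K] (f : P1 H ≃* P1 K) :
    ∀ X : P1 H, X.1.Finite ↔ (f X).1.Finite :=
  stmt3_general f
end

section
/- For every numerical monoid H, the automorphism group of the reduced large power monoid P_0(H) is trivial; that is, the only automorphism of P_0(H) is the identity. -/
open Pointwise

/-- A numerical monoid: a cofinite additive submonoid of `ℕ` containing `0`. -/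
structure NumMonoid where
  carrier : Set ℕ
  zero_mem : 0 ∈ carrier
  add_mem : ∀ {a b : ℕ}, a ∈ carrier → b ∈ carrier → a + b ∈ carrier
  cofinite : carrierᶜ.Finite

/-- The reduced large power monoid of a numerical monoid `H`: subsets of `H` containing
`0`, under sumset addition. -/
def P0 (H : NumMonoid) : Type := {X : Set ℕ // 0 ∈ X ∧ X ⊆ H.carrier}

noncomputable instance (H : NumMonoid) : Add (P0 H) :=
  ⟨fun X Y => ⟨X.1 + Y.1, by simpa using Set.add_mem_add X.2.1 Y.2.1, by
    rintro z ⟨a, ha, b, hb, rfl⟩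
    exact H.add_mem (X.2.2 ha) (Y.2.2 hb)⟩⟩

/-!
The idempotents of the power monoid of `M` are the submonoids `S` of `M`, and `X + S = S` means
`X ⊆ S`, so an automorphism `f` induces an automorphism of the lattice of submonoids. For `M ≤ ℕ`
the nonzero cyclic submonoids are the sup-irreducible elements of this lattice, so `f` permutes
the elements of `M`, through some `σ` preserving the relation `a ∈ ⟨b, c⟩`.

For `M = ℕ` such a `σ` is the identity. It fixes `2`, because `1` and `2` are the only `n` such that
`x ∈ ⟨n, y⟩` or `y ∈ ⟨n, x⟩` for all `x`, `y`; it fixes the odd numbers, because on them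
`n ∈ ⟨2, m⟩` is the order `m ≤ n`; and even numbers are located relative to odd ones. Applied to
`⟨a⟩ ≅ ℕ` this gives `σ (n a) = n σ a` in general, hence `c σ a = a σ c`, and comparing with the
least nonzero element yields `σ = id`. So `f` fixes every idempotent, and membership `m ∈ X` can be
read off from the sums of `X` with idempotents.
-/

section Submonoids

variable {M N : Type*} [AddCommMonoid M] [AddCommMonoid N]

theorem eq_multiples_of_supIrred {S : AddSubmonoid M} (hS : SupIrred S) {b : M} (hb : b ∈ S)
    (hb0 : b ≠ 0) (hirr : ∀ x ∈ S, ∀ y ∈ S, x + y = b → x = 0 ∨ y = 0) :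
    S = AddSubmonoid.multiples b := by
  let T : AddSubmonoid M :=
    { carrier := {x | x ∈ S ∧ x ≠ b}
      zero_mem' := ⟨S.zero_mem, hb0.symm⟩
      add_mem' := by
        rintro x y ⟨hx, hxb⟩ ⟨hy, hyb⟩
        refine ⟨S.add_mem hx hy, fun hxy => ?_⟩
        rcases hirr x hx y hy hxy with rfl | rfl
        · exact hyb (by rwa [zero_add] at hxy)
        · exact hxb (by rwa [add_zero] at hxy) }
  have hsup : AddSubmonoid.multiples b ⊔ T = S := by
    refine le_antisymm (sup_le (AddSubmonoid.multiples_le.2 hb) fun x hx => hx.1) fun x hx => ?_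
    by_cases hxb : x = b
    · exact AddSubmonoid.mem_sup_left (hxb ▸ AddSubmonoid.mem_multiples b)
    · exact AddSubmonoid.mem_sup_right ⟨hx, hxb⟩
  rcases hS.2 hsup with h | h
  · exact h.symm
  · exact absurd rfl (h ▸ hb : b ∈ T).2

theorem supIrred_multiples {a : M} (ha : Function.Injective fun n : ℕ => n • a) :
    SupIrred (AddSubmonoid.multiples a) := by
  refine ⟨fun hmin => ?_, fun B C hBC => ?_⟩
  · have ha0 : a ∈ (⊥ : AddSubmonoid M) :=
      isMin_iff_eq_bot.1 hmin ▸ AddSubmonoid.mem_multiples a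
    have : 1 = 0 := ha (by simpa using ha0)
    exact one_ne_zero this
  · obtain ⟨b, hb, c, hc, hbc⟩ :=
      AddSubmonoid.mem_sup.1 (hBC ▸ AddSubmonoid.mem_multiples a : a ∈ B ⊔ C)
    obtain ⟨k, rfl⟩ := (hBC ▸ le_sup_left : B ≤ AddSubmonoid.multiples a) hb
    obtain ⟨l, rfl⟩ := (hBC ▸ le_sup_right : C ≤ AddSubmonoid.multiples a) hc
    have hkl : k + l = 1 := ha (by simpa [add_smul] using hbc)
    rcases Nat.add_eq_one_iff.1 hkl with ⟨-, rfl⟩ | ⟨rfl, -⟩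
    · exact Or.inr (le_antisymm (hBC ▸ le_sup_right)
        (AddSubmonoid.multiples_le.2 (by simpa using hc)))
    · exact Or.inl (le_antisymm (hBC ▸ le_sup_left)
        (AddSubmonoid.multiples_le.2 (by simpa using hb)))

theorem supIrred_orderIso_apply {α β : Type*} [SemilatticeSup α] [SemilatticeSup β] (e : α ≃o β)
    {a : α} (ha : SupIrred a) : SupIrred (e a) := by
  refine ⟨fun h => ha.1 ((e.isMin_apply).1 h), fun b c hbc => ?_⟩
  have : e.symm b ⊔ e.symm c = a := by rw [← map_sup, hbc, e.symm_apply_apply]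
  simpa only [e.symm_apply_eq] using ha.2 this

theorem closure_pair_eq_sup_multiples (a b : M) :
    AddSubmonoid.closure {a, b} = AddSubmonoid.multiples a ⊔ AddSubmonoid.multiples b := by
  rw [AddSubmonoid.multiples_eq_closure, AddSubmonoid.multiples_eq_closure,
    ← AddSubmonoid.closure_union, Set.singleton_union]

theorem nsmul_mem_closure_pair_nsmul_iff {a : M} (ha : Function.Injective fun n : ℕ => n • a)
    (x y z : ℕ) :
    x • a ∈ AddSubmonoid.closure {y • a, z • a} ↔ x ∈ AddSubmonoid.closure {y, z} := by
  simp only [AddSubmonoid.mem_closure_pair, ← mul_smul, ← add_smul, smul_eq_mul, ha.eq_iff]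

/-- A map `σ` compatible with membership in two-generated submonoids. This is the trace on
elements of an isomorphism between lattices of submonoids. -/
def PreservesPairClosure (σ : M → N) : Prop :=
  ∀ a b c, σ a ∈ AddSubmonoid.closure {σ b, σ c} ↔ a ∈ AddSubmonoid.closure {b, c}

namespace PreservesPairClosure

theorem of_map_multiples {σ : M → N} (φ : AddSubmonoid M ≃o AddSubmonoid N)
    (hσ : ∀ a, φ (AddSubmonoid.multiples a) = AddSubmonoid.multiples (σ a)) :
    PreservesPairClosure σ := by
  intro a b c
  rw [closure_pair_eq_sup_multiples, closure_pair_eq_sup_multiples, ← AddSubmonoid.multiples_le,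
    ← hσ, ← hσ, ← hσ, ← map_sup, φ.le_iff_le, AddSubmonoid.multiples_le]

theorem mem_multiples_iff {σ : M → N} (hσ : PreservesPairClosure σ) {a b : M} :
    σ a ∈ AddSubmonoid.multiples (σ b) ↔ a ∈ AddSubmonoid.multiples b := by
  simpa only [Set.pair_eq_singleton, ← AddSubmonoid.multiples_eq_closure] using hσ a b b

theorem symm {σ : M ≃ N} (hσ : PreservesPairClosure σ) : PreservesPairClosure σ.symm := by
  intro a b c
  simpa only [σ.apply_symm_apply] using (hσ (σ.symm a) (σ.symm b) (σ.symm c)).symm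

theorem map_zero {σ : M ≃ N} (hσ : PreservesPairClosure σ) : σ 0 = 0 := by
  have h : σ 0 ∈ AddSubmonoid.multiples (σ (σ.symm 0)) :=
    hσ.mem_multiples_iff.2 (AddSubmonoid.zero_mem _)
  simpa using h

theorem exists_nat_perm {σ : M ≃ N} (hσ : PreservesPairClosure σ) {a : M}
    (ha : Function.Injective fun n : ℕ => n • a) (hσa : Function.Injective fun n : ℕ => n • σ a) :
    ∃ τ : ℕ ≃ ℕ, PreservesPairClosure τ ∧ ∀ n, σ (n • a) = τ n • σ a := by
  have hmap (n : ℕ) : ∃ m : ℕ, m • σ a = σ (n • a) :=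
    hσ.mem_multiples_iff.2 (AddSubmonoid.nsmul_mem _ (AddSubmonoid.mem_multiples a) n)
  choose τ hτ using hmap
  have hinj : Function.Injective τ := fun m n h =>
    ha (σ.injective (by rw [← hτ, ← hτ, h]))
  have hsurj : Function.Surjective τ := by
    intro m
    have hm : σ.symm (m • σ a) ∈ AddSubmonoid.multiples a := by
      rw [← hσ.mem_multiples_iff, σ.apply_symm_apply]
      exact AddSubmonoid.nsmul_mem _ (AddSubmonoid.mem_multiples _) m
    obtain ⟨n, hn : n • a = _⟩ := hm
    exact ⟨n, hσa (by simp only [hτ, hn, σ.apply_symm_apply])⟩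
  refine ⟨Equiv.ofBijective τ ⟨hinj, hsurj⟩, fun x y z => ?_, fun n => (hτ n).symm⟩
  change τ x ∈ AddSubmonoid.closure {τ y, τ z} ↔ _
  rw [← nsmul_mem_closure_pair_nsmul_iff hσa, hτ, hτ, hτ, hσ, nsmul_mem_closure_pair_nsmul_iff ha]

end PreservesPairClosure

end Submonoids

section Nat

theorem mem_closure_pair_two_of_odd {m n : ℕ} (hm : Odd m) (hn : Odd n) :
    n ∈ AddSubmonoid.closure {2, m} ↔ m ≤ n := by
  rw [AddSubmonoid.mem_closure_pair]
  constructor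
  · rintro ⟨i, j, rfl⟩
    rcases j.eq_zero_or_pos with rfl | hj
    · exact absurd hn (by simp)
    · exact le_add_left (Nat.le_mul_of_pos_left m hj)
  · intro h
    obtain ⟨k, hk⟩ := Nat.Odd.sub_odd hn hm
    exact ⟨k, 1, by simp only [smul_eq_mul]; omega⟩

theorem mem_closure_pair_two_of_even {n : ℕ} (hn : Even n) (m : ℕ) :
    n ∈ AddSubmonoid.closure {2, m} := by
  obtain ⟨k, rfl⟩ := hn
  exact (AddSubmonoid.mem_closure_pair _ _ _).2 ⟨k, 0, by simp [mul_two]⟩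

theorem succ_notMem_closure_pair {n : ℕ} (hn : 2 ≤ n) :
    n + 1 ∉ AddSubmonoid.closure {n, n + 2} := by
  rw [AddSubmonoid.mem_closure_pair]
  rintro ⟨i, j, hij⟩
  simp only [smul_eq_mul] at hij
  have hj : j = 0 := by
    by_contra hj
    nlinarith [Nat.pos_of_ne_zero hj]
  have hi : i < 2 := by nlinarith
  subst hj
  interval_cases i <;> omega

theorem add_two_notMem_closure_pair {n : ℕ} (hn : 3 ≤ n) :
    n + 2 ∉ AddSubmonoid.closure {n, n + 1} := by
  rw [AddSubmonoid.mem_closure_pair]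
  rintro ⟨i, j, hij⟩
  simp only [smul_eq_mul] at hij
  have hlt : i + j < 2 := by nlinarith
  have hcases : i = 0 ∧ j = 0 ∨ i = 1 ∧ j = 0 ∨ i = 0 ∧ j = 1 := by omega
  rcases hcases with ⟨rfl, rfl⟩ | ⟨rfl, rfl⟩ | ⟨rfl, rfl⟩ <;> omega

theorem forall_mem_closure_pair_or_iff {n : ℕ} :
    (∀ x y, x ∈ AddSubmonoid.closure {n, y} ∨ y ∈ AddSubmonoid.closure {n, x}) ↔
      n = 1 ∨ n = 2 := by
  constructor
  · intro h
    by_contra! hn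
    rcases n.eq_zero_or_pos with rfl | hpos
    · have h23 := h 2 3
      simp only [AddSubmonoid.mem_closure_pair, smul_eq_mul] at h23
      omega
    · have hn3 : 3 ≤ n := by omega
      exact (h (n + 1) (n + 2)).elim (succ_notMem_closure_pair (by omega))
        (add_two_notMem_closure_pair hn3)
  · rintro (rfl | rfl) x y
    · exact Or.inl ((AddSubmonoid.mem_closure_pair _ _ _).2 ⟨x, 0, by simp⟩)
    · rcases x.even_or_odd with hx | hx
      · exact Or.inl (mem_closure_pair_two_of_even hx y)
      rcases y.even_or_odd with hy | hy
      · exact Or.inr (mem_closure_pair_two_of_even hy x)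
      · rw [mem_closure_pair_two_of_odd hy hx, mem_closure_pair_two_of_odd hx hy]
        exact le_total y x

namespace PreservesPairClosure

variable {τ : ℕ ≃ ℕ}

theorem nat_map_one (hτ : PreservesPairClosure τ) : τ 1 = 1 := by
  have h : τ (τ.symm 1) ∈ AddSubmonoid.multiples (τ 1) :=
    hτ.mem_multiples_iff.2 ⟨τ.symm 1, by simp⟩
  obtain ⟨k, hk : k * τ 1 = τ (τ.symm 1)⟩ := h
  exact Nat.eq_one_of_mul_eq_one_left (hk.trans (τ.apply_symm_apply 1))

theorem nat_map_two (hτ : PreservesPairClosure τ) : τ 2 = 2 := by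
  have h : τ 2 = 1 ∨ τ 2 = 2 := by
    refine forall_mem_closure_pair_or_iff.1 fun x y => ?_
    rw [← τ.apply_symm_apply x, ← τ.apply_symm_apply y, hτ, hτ]
    exact forall_mem_closure_pair_or_iff.2 (Or.inr rfl) _ _
  refine h.resolve_left fun h1 => ?_
  have : 2 = 1 := τ.injective (h1.trans hτ.nat_map_one.symm)
  omega

theorem nat_even_iff (hτ : PreservesPairClosure τ) (n : ℕ) : Even (τ n) ↔ Even n := by
  have h (k : ℕ) : k ∈ AddSubmonoid.multiples 2 ↔ Even k := by
    simp [AddSubmonoid.mem_multiples_iff, even_iff_exists_two_mul, mul_comm, eq_comm]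
  rw [← h, ← h, ← hτ.mem_multiples_iff (a := n), hτ.nat_map_two]

theorem nat_odd_iff (hτ : PreservesPairClosure τ) (n : ℕ) : Odd (τ n) ↔ Odd n := by
  rw [← Nat.not_even_iff_odd, ← Nat.not_even_iff_odd, hτ.nat_even_iff]

theorem nat_map_odd (hτ : PreservesPairClosure τ) {n : ℕ} (hn : Odd n) : τ n = n := by
  let e : {n : ℕ // Odd n} ≃o {n : ℕ // Odd n} :=
    { toEquiv := Equiv.Perm.subtypePerm τ hτ.nat_odd_iff
      map_rel_iff' := by
        rintro ⟨x, hx⟩ ⟨y, hy⟩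
        change τ x ≤ τ y ↔ x ≤ y
        rw [← mem_closure_pair_two_of_odd hx hy, ← hτ, hτ.nat_map_two,
          mem_closure_pair_two_of_odd ((hτ.nat_odd_iff x).2 hx) ((hτ.nat_odd_iff y).2 hy)] }
  exact congrArg (fun e => (e ⟨n, hn⟩ : ℕ)) (Subsingleton.elim e (OrderIso.refl _))

-- The odd number `2n + 1 = n + (n + 1)` lies in `⟨n, n + 1⟩`, hence in `⟨τ n, n + 1⟩`;
-- since `τ n` is even, the coefficient of `n + 1` must be `1`.
theorem nat_map_dvd_of_even (hτ : PreservesPairClosure τ) {n : ℕ} (hn : Even n) : τ n ∣ n := by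
  have hmem : 2 * n + 1 ∈ AddSubmonoid.closure {τ n, n + 1} := by
    rw [← hτ.nat_map_odd (odd_two_mul_add_one n), ← hτ.nat_map_odd hn.add_one, hτ,
      AddSubmonoid.mem_closure_pair]
    exact ⟨1, 1, by simp only [smul_eq_mul]; omega⟩
  obtain ⟨i, j, hij⟩ := (AddSubmonoid.mem_closure_pair _ _ _).1 hmem
  simp only [smul_eq_mul] at hij
  have hi : Even (i * τ n) := ((hτ.nat_even_iff n).2 hn).mul_left i
  have hj : j = 1 := by
    have : j < 2 := by nlinarith
    interval_cases j
    · rw [zero_mul, add_zero] at hij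
      exact absurd (hij ▸ hi) (by simp)
    · rfl
  subst hj
  exact ⟨i, by linarith⟩

theorem nat_map_eq (hτ : PreservesPairClosure τ) (n : ℕ) : τ n = n := by
  rcases n.even_or_odd with hn | hn
  · have h : n ∣ τ n := by
      simpa only [τ.symm_apply_apply] using
        hτ.symm.nat_map_dvd_of_even ((hτ.nat_even_iff n).2 hn)
    exact Nat.dvd_antisymm (hτ.nat_map_dvd_of_even hn) h
  · exact hτ.nat_map_odd hn

theorem map_nsmul_of_injective {M N : Type*} [AddCommMonoid M] [AddCommMonoid N] {σ : M ≃ N}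
    (hσ : PreservesPairClosure σ) {a : M} (ha : Function.Injective fun n : ℕ => n • a)
    (hσa : Function.Injective fun n : ℕ => n • σ a) (n : ℕ) :
    σ (n • a) = n • σ a := by
  obtain ⟨τ, hτ, h⟩ := hσ.exists_nat_perm ha hσa
  rw [h, hτ.nat_map_eq]

end PreservesPairClosure

end Nat

section WellOrdered

variable {M N : Type*} [AddCommMonoid M] [LinearOrder M] [IsOrderedCancelAddMonoid M]
  [WellFoundedLT M] [AddCommMonoid N] [LinearOrder N] [IsOrderedCancelAddMonoid N]
  [WellFoundedLT N]

theorem nonneg_of_wellFoundedLT (x : M) : 0 ≤ x := by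
  have hmono : StrictMono fun y : M => y + x := fun _ _ h => add_lt_add_left h x
  simpa using hmono.le_apply (x := 0)

theorem pos_of_ne_zero_of_wellFoundedLT {x : M} (hx : x ≠ 0) : 0 < x :=
  (nonneg_of_wellFoundedLT x).lt_of_ne' hx

theorem subsingleton_addUnits_of_wellFoundedLT : Subsingleton (AddUnits M) :=
  ⟨fun u v => by
    have h (w : AddUnits M) : (w : M) = 0 :=
      (add_eq_zero_iff_of_nonneg (nonneg_of_wellFoundedLT _) (nonneg_of_wellFoundedLT _)).1
        w.val_neg |>.1
    exact AddUnits.ext ((h u).trans (h v).symm)⟩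

theorem injective_nsmul_of_wellFoundedLT {a : M} (ha : a ≠ 0) :
    Function.Injective fun n : ℕ => n • a :=
  (nsmul_left_strictMono (pos_of_ne_zero_of_wellFoundedLT ha)).injective

theorem PreservesPairClosure.map_nsmul {σ : M ≃ N} (hσ : PreservesPairClosure σ) (n : ℕ) (a : M) :
    σ (n • a) = n • σ a := by
  rcases eq_or_ne a 0 with rfl | ha
  · rw [nsmul_zero, hσ.map_zero, nsmul_zero]
  · have hσa : σ a ≠ 0 := hσ.map_zero ▸ σ.injective.ne ha
    exact hσ.map_nsmul_of_injective (injective_nsmul_of_wellFoundedLT ha)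
      (injective_nsmul_of_wellFoundedLT hσa) n

theorem le_of_mem_multiples {a b : M} (h : a ∈ AddSubmonoid.multiples b) (ha : a ≠ 0) : b ≤ a := by
  obtain ⟨k, rfl⟩ := h
  have hk : k ≠ 0 := by
    rintro rfl
    exact ha (zero_nsmul b)
  exact le_self_nsmul (nonneg_of_wellFoundedLT b) hk

theorem multiples_injective : Function.Injective (AddSubmonoid.multiples : M → AddSubmonoid M) := by
  intro a b h
  have hab : a ∈ AddSubmonoid.multiples b := h ▸ AddSubmonoid.mem_multiples a
  have hba : b ∈ AddSubmonoid.multiples a := h ▸ AddSubmonoid.mem_multiples b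
  by_cases ha : a = 0
  · subst ha
    simpa [eq_comm] using hba
  · have hb : b ≠ 0 := by
      rintro rfl
      exact ha (by simpa using hab)
    exact le_antisymm (le_of_mem_multiples hba hb) (le_of_mem_multiples hab ha)

theorem exists_eq_multiples_of_supIrred {S : AddSubmonoid M} (hS : SupIrred S) :
    ∃ a, S = AddSubmonoid.multiples a := by
  have hne : {x | x ∈ S ∧ x ≠ 0}.Nonempty :=
    S.bot_or_exists_ne_zero.resolve_left hS.ne_bot
  obtain ⟨b, ⟨hb, hb0⟩, hmin⟩ := WellFounded.has_min wellFounded_lt _ hne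
  refine ⟨b, eq_multiples_of_supIrred hS hb hb0 fun x hx y _ hxy => ?_⟩
  by_contra! h
  have hlt : x < x + y := lt_add_of_pos_right x (pos_of_ne_zero_of_wellFoundedLT h.2)
  exact hmin x ⟨hx, h.1⟩ (hxy ▸ hlt)

theorem exists_map_multiples_eq_multiples (φ : AddSubmonoid M ≃o AddSubmonoid N) (a : M) :
    ∃ b, φ (AddSubmonoid.multiples a) = AddSubmonoid.multiples b := by
  by_cases ha : a = 0
  · exact ⟨0, by rw [ha, AddSubmonoid.multiples_zero, AddSubmonoid.multiples_zero, map_bot]⟩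
  · exact exists_eq_multiples_of_supIrred
      (supIrred_orderIso_apply φ (supIrred_multiples (injective_nsmul_of_wellFoundedLT ha)))

theorem exists_equiv_map_multiples (φ : AddSubmonoid M ≃o AddSubmonoid N) :
    ∃ σ : M ≃ N, ∀ a, φ (AddSubmonoid.multiples a) = AddSubmonoid.multiples (σ a) := by
  choose σ hσ using exists_map_multiples_eq_multiples φ
  choose ρ hρ using exists_map_multiples_eq_multiples φ.symm
  refine ⟨⟨σ, ρ, fun a => ?_, fun b => ?_⟩, hσ⟩
  · exact multiples_injective (by rw [← hρ, ← hσ, φ.symm_apply_apply])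
  · exact multiples_injective (by rw [← hσ, ← hρ, φ.apply_symm_apply])

end WellOrdered

section SubmonoidsOfNat

variable {H : AddSubmonoid ℕ}

namespace PreservesPairClosure

variable {σ : H ≃ H}

theorem mul_apply_comm (hσ : PreservesPairClosure σ) (a c : H) : (c : ℕ) * σ a = a * σ c := by
  have hac : (c : ℕ) • a = (a : ℕ) • c := Subtype.ext (mul_comm (c : ℕ) a)
  have h : (c : ℕ) • σ a = (a : ℕ) • σ c := by
    rw [← hσ.map_nsmul, ← hσ.map_nsmul, hac]
  exact congrArg Subtype.val h

theorem apply_eq_self (hσ : PreservesPairClosure σ) (a : H) : σ a = a := by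
  rcases eq_or_ne a 0 with rfl | ha
  · exact hσ.map_zero
  obtain ⟨m, hm0, hmin⟩ := WellFounded.has_min wellFounded_lt {x : H | x ≠ 0} ⟨a, ha⟩
  have hle {x : H} (hx : x ≠ 0) : (m : ℕ) ≤ x := not_lt.1 (hmin x hx)
  have hmpos : 0 < (m : ℕ) := pos_of_ne_zero_of_wellFoundedLT (M := H) hm0
  have hσm : (σ m : ℕ) = m := by
    have hsymm : (m : ℕ) * m = σ.symm m * σ m := by
      simpa only [σ.apply_symm_apply] using hσ.mul_apply_comm (σ.symm m) m
    have hle_symm : (m : ℕ) ≤ σ.symm m := hle (hσ.symm.map_zero ▸ σ.symm.injective.ne hm0)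
    have hle_apply : (m : ℕ) ≤ σ m := hle (hσ.map_zero ▸ σ.injective.ne hm0)
    refine le_antisymm (Nat.le_of_mul_le_mul_left ?_ hmpos) hle_apply
    calc (m : ℕ) * σ m ≤ σ.symm m * σ m := Nat.mul_le_mul_right _ hle_symm
      _ = m * m := hsymm.symm
  have h := hσ.mul_apply_comm a m
  rw [hσm, mul_comm] at h
  exact Subtype.ext (Nat.eq_of_mul_eq_mul_right hmpos h)

end PreservesPairClosure

theorem orderIso_addSubmonoid_apply_eq_self (φ : AddSubmonoid H ≃o AddSubmonoid H)
    (S : AddSubmonoid H) : φ S = S := by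
  obtain ⟨σ, hσ⟩ := exists_equiv_map_multiples φ
  have hfix (a : H) : φ (AddSubmonoid.multiples a) = AddSubmonoid.multiples a := by
    rw [hσ, (PreservesPairClosure.of_map_multiples φ hσ).apply_eq_self]
  ext a
  rw [← AddSubmonoid.multiples_le, ← hfix, φ.le_iff_le, AddSubmonoid.multiples_le]

end SubmonoidsOfNat

section PowerMonoid

variable {M N : Type*} [AddCommMonoid M] [AddCommMonoid N]

variable (M) in
/-- The reduced large power monoid of `M`: the subsets of `M` containing `0`, under sumset
addition. -/
def reducedPowerMonoid : AddSubmonoid (Set M) where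
  carrier := {X | 0 ∈ X}
  zero_mem' := Set.zero_mem_zero
  add_mem' hX hY := ⟨0, hX, 0, hY, add_zero 0⟩

namespace reducedPowerMonoid

/-- A submonoid of `M`, as an element of the reduced power monoid. -/
def ofSubmonoid (S : AddSubmonoid M) : reducedPowerMonoid M := ⟨S, S.zero_mem⟩

theorem add_ofSubmonoid_eq_iff {X : reducedPowerMonoid M} {S : AddSubmonoid M} :
    X + ofSubmonoid S = ofSubmonoid S ↔ (X : Set M) ⊆ S := by
  constructor
  · intro h x hx
    have : x ∈ ((X + ofSubmonoid S : reducedPowerMonoid M) : Set M) :=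
      ⟨x, hx, 0, S.zero_mem, add_zero x⟩
    rwa [h] at this
  · refine fun h => Subtype.ext (Set.Subset.antisymm ?_ fun s hs => ⟨0, X.2, s, hs, zero_add s⟩)
    rintro _ ⟨x, hx, s, hs, rfl⟩
    exact S.add_mem (h hx) hs

/-- An idempotent of the reduced power monoid, as a submonoid of `M`. -/
def toSubmonoid (X : reducedPowerMonoid M) (hX : X + X = X) : AddSubmonoid M where
  carrier := X
  zero_mem' := X.2
  add_mem' {x y} hx hy := by
    rw [← hX]
    exact ⟨x, hx, y, hy, rfl⟩

theorem ofSubmonoid_toSubmonoid (X : reducedPowerMonoid M) (hX : X + X = X) :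
    ofSubmonoid (toSubmonoid X hX) = X :=
  rfl

theorem map_ofSubmonoid_add_self (f : reducedPowerMonoid M ≃+ reducedPowerMonoid N)
    (S : AddSubmonoid M) : f (ofSubmonoid S) + f (ofSubmonoid S) = f (ofSubmonoid S) := by
  rw [← map_add, add_ofSubmonoid_eq_iff.2 Set.Subset.rfl]

/-- The isomorphism between lattices of submonoids obtained by restricting an isomorphism between
reduced power monoids to idempotents. -/
def submonoidOrderIso (f : reducedPowerMonoid M ≃+ reducedPowerMonoid N) :
    AddSubmonoid M ≃o AddSubmonoid N where
  toFun S := toSubmonoid (f (ofSubmonoid S)) (map_ofSubmonoid_add_self f S)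
  invFun T := toSubmonoid (f.symm (ofSubmonoid T)) (map_ofSubmonoid_add_self f.symm T)
  left_inv S := SetLike.coe_injective (congrArg Subtype.val (f.symm_apply_apply (ofSubmonoid S)))
  right_inv T := SetLike.coe_injective (congrArg Subtype.val (f.apply_symm_apply (ofSubmonoid T)))
  map_rel_iff' {S T} := by
    change ((f (ofSubmonoid S) : Set N) ⊆
      toSubmonoid (f (ofSubmonoid T)) (map_ofSubmonoid_add_self f T)) ↔ S ≤ T
    rw [← add_ofSubmonoid_eq_iff, ofSubmonoid_toSubmonoid, ← map_add, f.injective.eq_iff,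
      add_ofSubmonoid_eq_iff, ofSubmonoid, SetLike.coe_subset_coe]

theorem ofSubmonoid_submonoidOrderIso (f : reducedPowerMonoid M ≃+ reducedPowerMonoid N)
    (S : AddSubmonoid M) : ofSubmonoid (submonoidOrderIso f S) = f (ofSubmonoid S) :=
  rfl

/-- The submonoid `{0} ∪ I` attached to a semigroup ideal `I` of `M`. -/
def idealSubmonoid (I : Set M) (hI : ∀ x ∈ I, ∀ y, x + y ∈ I) : AddSubmonoid M where
  carrier := insert 0 I
  zero_mem' := Set.mem_insert 0 I
  add_mem' {x y} hx hy := by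
    rcases hx with rfl | hx
    · rwa [zero_add]
    · exact Or.inr (hI x hx y)

theorem coe_add_ofSubmonoid_idealSubmonoid (X : reducedPowerMonoid M) {I : Set M}
    (hI : ∀ x ∈ I, ∀ y, x + y ∈ I) :
    ((X + ofSubmonoid (idealSubmonoid I hI) : reducedPowerMonoid M) : Set M) =
      (X : Set M) ∪ I := by
  ext z
  constructor
  · rintro ⟨x, hx, y, rfl | hy, rfl⟩
    · exact Or.inl (by simpa using hx)
    · exact Or.inr (by simpa only [add_comm y x] using hI y hy x)
  · rintro (hz | hz)
    · exact ⟨z, hz, 0, Or.inl rfl, add_zero z⟩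
    · exact ⟨0, X.2, z, Or.inr hz, zero_add z⟩

-- Membership of `m` in `X` is visible to idempotents: with `I = m + M`, both `I` and `I \ {m}` are
-- ideals, and `X ∪ I = X ∪ (I \ {m})` exactly when `m ∈ X`.
theorem exists_mem_iff_add_ofSubmonoid_eq [IsCancelAdd M] [Subsingleton (AddUnits M)] (m : M) :
    ∃ S T : AddSubmonoid M, ∀ X : reducedPowerMonoid M,
      m ∈ (X : Set M) ↔ X + ofSubmonoid S = X + ofSubmonoid T := by
  have hI : ∀ x ∈ Set.range (m + ·), ∀ y, x + y ∈ Set.range (m + ·) := by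
    rintro _ ⟨h, rfl⟩ y
    exact ⟨h + y, (add_assoc m h y).symm⟩
  have hJ : ∀ x ∈ Set.range (m + ·) \ {m}, ∀ y, x + y ∈ Set.range (m + ·) \ {m} := by
    rintro _ ⟨⟨h, rfl⟩, hne⟩ y
    refine ⟨hI _ ⟨h, rfl⟩ y, fun hm => hne ?_⟩
    have hzero : h + y = 0 := by simpa [add_assoc] using hm
    simp [(add_eq_zero.1 hzero).1]
  refine ⟨idealSubmonoid _ hI, idealSubmonoid _ hJ, fun X => ?_⟩
  have hmI : m ∈ Set.range (m + ·) := ⟨0, add_zero m⟩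
  rw [Subtype.ext_iff, coe_add_ofSubmonoid_idealSubmonoid, coe_add_ofSubmonoid_idealSubmonoid]
  constructor
  · intro hm
    ext x
    by_cases hx : x = m
    · simp only [hx, Set.mem_union, hm, true_or]
    · simp only [Set.mem_union, Set.mem_sdiff, Set.mem_singleton_iff, hx, not_false_eq_true,
        and_true]
  · intro h
    have hmem : m ∈ (X : Set M) ∪ Set.range (m + ·) \ {m} := h ▸ Or.inr hmI
    exact hmem.resolve_right fun hm => hm.2 rfl

theorem apply_eq_self_of_forall_ofSubmonoid [IsCancelAdd M] [Subsingleton (AddUnits M)]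
    {f : reducedPowerMonoid M ≃+ reducedPowerMonoid M}
    (hf : ∀ S, f (ofSubmonoid S) = ofSubmonoid S) (X : reducedPowerMonoid M) : f X = X := by
  refine Subtype.ext (Set.ext fun m => ?_)
  obtain ⟨S, T, h⟩ := exists_mem_iff_add_ofSubmonoid_eq m
  rw [h, h, ← hf S, ← hf T, ← map_add, ← map_add, f.injective.eq_iff, hf, hf]

end reducedPowerMonoid

end PowerMonoid

theorem stmt11_general (H : AddSubmonoid ℕ) (f : reducedPowerMonoid H ≃+ reducedPowerMonoid H)
    (X : reducedPowerMonoid H) : f X = X := by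
  have : Subsingleton (AddUnits H) := subsingleton_addUnits_of_wellFoundedLT
  refine reducedPowerMonoid.apply_eq_self_of_forall_ofSubmonoid (fun S => ?_) X
  rw [← reducedPowerMonoid.ofSubmonoid_submonoidOrderIso, orderIso_addSubmonoid_apply_eq_self]

namespace NumMonoid

/-- A numerical monoid, as a submonoid of `ℕ`. -/
def toAddSubmonoid (H : NumMonoid) : AddSubmonoid ℕ where
  carrier := H.carrier
  zero_mem' := H.zero_mem
  add_mem' := H.add_mem

/-- `P0 H` consists of subsets of `ℕ` and `reducedPowerMonoid` of subsets of the type of elements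
of `H`; the two are identified by taking images in `ℕ`. -/
noncomputable def reducedPowerMonoidEquiv (H : NumMonoid) :
    reducedPowerMonoid H.toAddSubmonoid ≃+ P0 H where
  toFun X := ⟨(↑) '' (X : Set H.toAddSubmonoid), ⟨0, X.2, rfl⟩, by
    rintro _ ⟨x, -, rfl⟩
    exact x.2⟩
  invFun Y := ⟨Subtype.val ⁻¹' Y.1, Y.2.1⟩
  left_inv X := Subtype.ext (Set.preimage_image_eq _ Subtype.val_injective)
  right_inv Y := Subtype.ext (Set.image_preimage_eq_of_subset fun y hy => ⟨⟨y, Y.2.2 hy⟩, rfl⟩)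
  map_add' X Y := Subtype.ext (Set.image_add H.toAddSubmonoid.subtype)

end NumMonoid

/-- The automorphism group of the reduced large power monoid of a numerical
monoid is trivial. -/
theorem stmt11 (H : NumMonoid) (f : P0 H ≃+ P0 H) : ∀ X : P0 H, f X = X :=
  H.reducedPowerMonoidEquiv.surjective.forall.2 fun X => (AddEquiv.symm_apply_eq _).1
    (stmt11_general _ ((H.reducedPowerMonoidEquiv.trans f).trans H.reducedPowerMonoidEquiv.symm) X)
end
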